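/- Limit jump formulas at an impulsive spike: in the regularised impulsive full pp-wave on ℝ^n (flat wave surface for simplicity, metric h with inverse h^{ik}), let x_ε solve the regularised geodesic x-equation through the first δ-spike of strength α with data converging to (x₀, ẋ₀) at the left of the strip [−ε, ε], and let r_ε be the corresponding r-component with data converging to (r₀, ṙ₀). Then as ε ↘ 0: (i) x_ε(ε) → x₀; (ii) ẋ_ε(ε)^i → ẋ₀^i − (1/2)h^{ik}(x₀)(2a_k(x₀)/L − α H_{,k}(x₀)); (iii) r_ε(ε) → r₀ + (α/2)H(x₀). -/

import Mathlib

open MeasureTheory Filter Set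

noncomputable section

/-- Partial derivative of `f` in the `j`-th coordinate direction at `x`. -/
def pderiv' (n : ℕ) (f : (Fin n → ℝ) → ℝ) (j : Fin n) (x : Fin n → ℝ) : ℝ :=
  fderiv ℝ f x (Pi.single j 1)

/-- Christoffel symbols of the metric `h` (with pointwise inverse `hinv`). -/
def christoffelSym (n : ℕ) (h hinv : (Fin n → ℝ) → Matrix (Fin n) (Fin n) ℝ)
    (x : Fin n → ℝ) (i j k : Fin n) : ℝ :=
  (1/2) * ∑ l, hinv x i l *
    (pderiv' n (fun y => h y l k) j x + pderiv' n (fun y => h y l j) k x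
      - pderiv' n (fun y => h y j k) l x)

/-- The bilinear form of the metric `h` at `x`. -/
def hBil (n : ℕ) (h : (Fin n → ℝ) → Matrix (Fin n) (Fin n) ℝ)
    (x v w : Fin n → ℝ) : ℝ := ∑ i, ∑ j, h x i j * v i * w j

/-- The `h`-norm of a tangent vector. -/
def hNorm (n : ℕ) (h : (Fin n → ℝ) → Matrix (Fin n) (Fin n) ℝ)
    (x v : Fin n → ℝ) : ℝ := Real.sqrt (hBil n h x v v)

/-- Length of the path `γ : [0,1] → ℝⁿ` w.r.t. the metric `h`. -/
def pathLen (n : ℕ) (h : (Fin n → ℝ) → Matrix (Fin n) (Fin n) ℝ)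
    (γ : ℝ → Fin n → ℝ) : ℝ := ∫ t in (0:ℝ)..1, hNorm n h (γ t) (deriv γ t)

/-- Riemannian distance associated to `h`. -/
def riemDist (n : ℕ) (h : (Fin n → ℝ) → Matrix (Fin n) (Fin n) ℝ)
    (p q : Fin n → ℝ) : ℝ :=
  sInf {L | ∃ γ : ℝ → Fin n → ℝ, ContDiff ℝ 1 γ ∧ γ 0 = p ∧ γ 1 = q ∧ L = pathLen n h γ}

/-- Metric completeness of `(ℝⁿ, h)`: every Cauchy sequence for the Riemannian
distance converges. -/
def RiemComplete (n : ℕ) (h : (Fin n → ℝ) → Matrix (Fin n) (Fin n) ℝ) : Prop :=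
  ∀ f : ℕ → (Fin n → ℝ),
    (∀ ε > 0, ∃ N, ∀ p ≥ N, ∀ q ≥ N, riemDist n h (f p) (f q) < ε) →
    ∃ y, Tendsto (fun m => riemDist n h (f m) y) atTop (nhds 0)

/-- The `i`-th component of the covariant derivative `D_{γ'} γ'` along `γ` at `t`. -/
def covD (n : ℕ) (h hinv : (Fin n → ℝ) → Matrix (Fin n) (Fin n) ℝ)
    (γ : ℝ → Fin n → ℝ) (t : ℝ) (i : Fin n) : ℝ :=
  deriv (deriv γ) t i +
    ∑ j, ∑ k, christoffelSym n h hinv (γ t) i j k * deriv γ t j * deriv γ t k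

/-- Riemannian gradient (indices raised with `hinv`). -/
def gradH (n : ℕ) (hinv : (Fin n → ℝ) → Matrix (Fin n) (Fin n) ℝ)
    (f : (Fin n → ℝ) → ℝ) (x : Fin n → ℝ) (i : Fin n) : ℝ :=
  ∑ j, hinv x i j * pderiv' n f j x

/-- Smoothness, symmetry, positive definiteness of the metric field `h`,
and `hinv` being its pointwise inverse. -/
def IsRiemMetric (n : ℕ) (h hinv : (Fin n → ℝ) → Matrix (Fin n) (Fin n) ℝ) : Prop :=
  (∀ i j, ContDiff ℝ (⊤ : ℕ∞) (fun x => h x i j)) ∧ (∀ i j, ContDiff ℝ (⊤ : ℕ∞) (fun x => hinv x i j)) ∧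
  (∀ x i j, h x i j = h x j i) ∧
  (∀ x v, v ≠ 0 → 0 < hBil n h x v v) ∧
  (∀ x, h x * hinv x = 1)


/-- The mollifier `δ_ε(t) = ε⁻¹ φ(t/ε)`. -/
def mollδ (φ : ℝ → ℝ) (ε t : ℝ) : ℝ := ε⁻¹ * φ (t / ε)

/-- Its primitive `Θ_ε(t) = ∫_{−ε}^t δ_ε`. -/
def mollΘ (φ : ℝ → ℝ) (ε t : ℝ) : ℝ := ∫ s in (-ε)..t, mollδ φ ε s

/-- The double-spike profile `δ^ε_{α,β}(u) = α δ_ε(u) + β δ_ε(u−L)`. -/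
def dab (φ : ℝ → ℝ) (ε α β L t : ℝ) : ℝ := α * mollδ φ ε t + β * mollδ φ ε (t - L)

/-- The regularised box `ϑ^ε_L(u) = (Θ_ε(u) − Θ_ε(u−L))/L`. -/
def thb (φ : ℝ → ℝ) (ε L t : ℝ) : ℝ := (mollΘ φ ε t - mollΘ φ ε (t - L)) / L

/-- The profile `δ^ε_{1/L, −1/L}`. -/
def dLL (φ : ℝ → ℝ) (ε L t : ℝ) : ℝ := (mollδ φ ε t - mollδ φ ε (t - L)) / L

/-- The `x`-equation of the regularised impulsive full pp-wave \eqref{eq:regeoe}. -/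
def impXEq (n : ℕ) (h hinv : (Fin n → ℝ) → Matrix (Fin n) (Fin n) ℝ)
    (H : (Fin n → ℝ) → ℝ) (a : (Fin n → ℝ) → Fin n → ℝ)
    (φ : ℝ → ℝ) (ε α β L : ℝ) (x : ℝ → Fin n → ℝ) (t : ℝ) : Prop :=
  ∀ i, deriv (deriv x) t i =
    -(∑ j, ∑ k, christoffelSym n h hinv (x t) i j k * deriv x t j * deriv x t k)
    - thb φ ε L t * (∑ j, ∑ k, hinv (x t) i k *
        (pderiv' n (fun y => a y k) j (x t) - pderiv' n (fun y => a y j) k (x t))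
        * deriv x t j)
    - (1/2) * ∑ k, hinv (x t) i k *
        (2 * a (x t) k * dLL φ ε L t - pderiv' n H k (x t) * dab φ ε α β L t)

/-- The `r`-equation of the regularised impulsive full pp-wave \eqref{eq:rgeoe}. -/
def impREq (n : ℕ) (h hinv : (Fin n → ℝ) → Matrix (Fin n) (Fin n) ℝ)
    (H : (Fin n → ℝ) → ℝ) (a : (Fin n → ℝ) → Fin n → ℝ)
    (φ : ℝ → ℝ) (ε α β L : ℝ) (x : ℝ → Fin n → ℝ) (r : ℝ → ℝ) (t : ℝ) : Prop :=
  deriv (deriv r) t =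
    thb φ ε L t * (∑ i, ∑ j,
      ((1/2) * (pderiv' n (fun y => a y i) j (x t) + pderiv' n (fun y => a y j) i (x t))
        - ∑ k, christoffelSym n h hinv (x t) k i j * a (x t) k)
      * deriv x t i * deriv x t j)
    - (∑ j, ((∑ i, (∑ k, hinv (x t) i k * a (x t) k) * thb φ ε L t * thb φ ε L t *
          (pderiv' n (fun y => a y i) j (x t) - pderiv' n (fun y => a y j) i (x t)))
        - pderiv' n H j (x t) * dab φ ε α β L t) * deriv x t j)
    - ((∑ i, (∑ k, hinv (x t) i k * a (x t) k) * thb φ ε L t *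
          (a (x t) i * dLL φ ε L t - (1/2) * pderiv' n H i (x t) * dab φ ε α β L t))
        - (1/2) * H (x t) * deriv (fun s => dab φ ε α β L s) t)

open Filter

/-! A spike `δ_ε` has mass `1` and size `O(1/ε)` on a strip of width `2ε`. Hence, along the strips,
a function whose derivative is `O(1/ε)` varies by `O(1)`, and one whose derivative is `o(1/ε)`
varies by `o(1)`. If `f' = p + δ_ε q` with `p = o(1/ε)` and `q → q₀`, subtracting `Θ_ε q₀` leaves a
derivative `o(1/ε)`, so `f` jumps by `q₀`. This gives the velocity jump once `(x, ẋ)` is known to be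
bounded; boundedness is a continuity argument, because the coefficient of `δ_ε` in the `x`-equation
depends on `x` but not on `ẋ`. In the `r`-equation the term `δ_ε' m` with `m = (α/2) H(x)` is
absorbed by passing to `ṙ - δ_ε m`, which has derivative `O(1/ε)` and so stays bounded; thus
`ṙ = O(1) + δ_ε m`, and `r` jumps by `lim m`. -/

section Development

open Asymptotics
open scoped Topology

/-- The filter of the strips `-ε ≤ t ≤ ε` in the `(ε, t)`-plane as `ε ↘ 0`: a property holds
eventually along it if, for all small `ε > 0`, it holds at every `t ∈ [-ε, ε]`. Convergence along
this filter is convergence uniform in `t ∈ [-ε, ε]`. -/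
def shrinkingStrip : Filter (ℝ × ℝ) :=
  comap Prod.fst (𝓝[>] 0) ⊓ 𝓟 {z | z.2 ∈ Icc (-z.1) z.1}

theorem eventually_shrinkingStrip {P : ℝ × ℝ → Prop} :
    (∀ᶠ z in shrinkingStrip, P z) ↔ ∀ᶠ ε in 𝓝[>] 0, ∀ t ∈ Icc (-ε) ε, P (ε, t) := by
  simp only [shrinkingStrip, eventually_inf_principal, eventually_comap, Prod.forall]
  exact eventually_congr (.of_forall fun ε => by grind)

theorem tendsto_fst_shrinkingStrip : Tendsto Prod.fst shrinkingStrip (𝓝[>] 0) :=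
  tendsto_comap.mono_left inf_le_left

theorem tendsto_right_shrinkingStrip : Tendsto (fun ε => (ε, ε)) (𝓝[>] 0) shrinkingStrip := by
  refine tendsto_iff_eventually.2 fun P hP => ?_
  filter_upwards [eventually_shrinkingStrip.1 hP, self_mem_nhdsWithin] with ε hε hpos
  exact hε ε ⟨neg_le_self (mem_Ioi.1 hpos).le, le_rfl⟩

theorem eventually_pos_shrinkingStrip : ∀ᶠ z in shrinkingStrip, 0 < z.1 :=
  tendsto_fst_shrinkingStrip.eventually self_mem_nhdsWithin

theorem eventually_snd_lt_sub_fst_shrinkingStrip {L : ℝ} (hL : 0 < L) :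
    ∀ᶠ z in shrinkingStrip, z.2 < L - z.1 := by
  rw [eventually_shrinkingStrip]
  filter_upwards [Ioo_mem_nhdsGT (half_pos hL)] with ε hε t ht
  linarith [hε.2, ht.2]

theorem one_isLittleO_inv_fst_shrinkingStrip :
    (fun _ => (1 : ℝ)) =o[shrinkingStrip] fun z => z.1⁻¹ :=
  (isLittleO_one_left_iff ℝ).2
    (tendsto_norm_atTop_atTop.comp (tendsto_inv_nhdsGT_zero.comp tendsto_fst_shrinkingStrip))

theorem eventually_mul_lt_nhdsGT_zero (A : ℝ) {b : ℝ} (hb : 0 < b) :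
    ∀ᶠ ε in 𝓝[>] (0 : ℝ), A * ε < b := by
  have : Tendsto (fun ε : ℝ => A * ε) (𝓝 0) (𝓝 (A * 0)) := (continuous_const_mul A).tendsto 0
  exact (this.mono_left nhdsWithin_le_nhds).eventually_lt_const (by simpa using hb)

theorem isBigO_one_comp_of_continuous {ι E F : Type*} [SeminormedAddCommGroup E] [ProperSpace E]
    [SeminormedAddCommGroup F] {G : E → F} (hG : Continuous G) {l : Filter ι} {u : ι → E}
    (hu : u =O[l] fun _ => (1 : ℝ)) : (fun i => G (u i)) =O[l] fun _ => (1 : ℝ) := by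
  obtain ⟨C, hC⟩ := hu.bound
  obtain ⟨D, hD⟩ := (isCompact_closedBall (0 : E) C).exists_bound_of_continuousOn hG.continuousOn
  refine IsBigO.of_bound D (hC.mono fun i hi => ?_)
  simpa using hD (u i) (by simpa using hi)

theorem continuous_matrix_of_mul_eq_one {X m 𝕜 : Type*} [TopologicalSpace X] [Fintype m]
    [DecidableEq m] [Field 𝕜] [TopologicalSpace 𝕜] [IsTopologicalDivisionRing 𝕜]
    {A B : X → Matrix m m 𝕜} (hA : Continuous A) (hAB : ∀ y, A y * B y = 1) : Continuous B := by
  have hB : B = fun y => (A y)⁻¹ := funext fun y => (Matrix.inv_eq_right_inv (hAB y)).symm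
  rw [hB, continuous_iff_continuousAt]
  refine fun y => ContinuousAt.comp (continuousAt_matrix_inv _ ?_) hA.continuousAt
  simpa using continuousAt_inv₀ (Matrix.isUnit_det_of_right_inverse (hAB y)).ne_zero

theorem eventually_hasDerivAt_of_contDiff_two {E : Type*} [NormedAddCommGroup E] [NormedSpace ℝ E]
    {f : ℝ → ℝ → E} (hf : ∀ᶠ ε in 𝓝[>] 0, ContDiff ℝ 2 (f ε)) :
    ∀ᶠ z in shrinkingStrip, HasDerivAt (f z.1) (deriv (f z.1) z.2) z.2 ∧
      HasDerivAt (deriv (f z.1)) (deriv (deriv (f z.1)) z.2) z.2 :=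
  (tendsto_fst_shrinkingStrip.eventually hf).mono fun z hz =>
    ⟨(hz.differentiable two_ne_zero z.2).hasDerivAt, (hz.differentiable_deriv_two z.2).hasDerivAt⟩

section MeanValue

variable {E : Type*} [NormedAddCommGroup E] [NormedSpace ℝ E]
  {f : ℝ → ℝ → E} {f' : ℝ × ℝ → E} {f₀ : E}

theorem eventually_norm_sub_left_le {C : ℝ}
    (hf : ∀ᶠ z in shrinkingStrip, HasDerivAt (f z.1) (f' z) z.2)
    (hC : ∀ᶠ z in shrinkingStrip, ‖f' z‖ ≤ C * ‖z.1⁻¹‖) :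
    ∀ᶠ z in shrinkingStrip, ‖f z.1 z.2 - f z.1 (-z.1)‖ ≤ 2 * C := by
  rw [eventually_shrinkingStrip] at hf hC ⊢
  filter_upwards [hf, hC, self_mem_nhdsWithin] with ε hf hC (hε : 0 < ε) t ht
  rw [Real.norm_of_nonneg (inv_pos.2 hε).le] at hC
  have hC₀ : 0 ≤ C * ε⁻¹ := (norm_nonneg _).trans (hC t ht)
  calc ‖f ε t - f ε (-ε)‖ ≤ C * ε⁻¹ * (t - -ε) :=
        norm_image_sub_le_of_norm_deriv_le_segment' (fun s hs => (hf s hs).hasDerivWithinAt)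
          (fun s hs => hC s (Ico_subset_Icc_self hs)) t ht
    _ ≤ C * ε⁻¹ * (2 * ε) := by gcongr; linarith [ht.2]
    _ = 2 * C := by field_simp

theorem isBigO_one_of_hasDerivAt (hf : ∀ᶠ z in shrinkingStrip, HasDerivAt (f z.1) (f' z) z.2)
    (hf' : f' =O[shrinkingStrip] fun z => z.1⁻¹)
    (hleft : (fun ε => f ε (-ε)) =O[𝓝[>] 0] fun _ => (1 : ℝ)) :
    (fun z => f z.1 z.2) =O[shrinkingStrip] fun _ => (1 : ℝ) := by
  obtain ⟨C, hC⟩ := hf'.bound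
  have hvar : (fun z => f z.1 z.2 - f z.1 (-z.1)) =O[shrinkingStrip] fun _ => (1 : ℝ) :=
    IsBigO.of_bound (2 * C) (by simpa using eventually_norm_sub_left_le hf hC)
  simpa using hvar.add (hleft.comp_tendsto tendsto_fst_shrinkingStrip)

theorem tendsto_shrinkingStrip_of_hasDerivAt
    (hf : ∀ᶠ z in shrinkingStrip, HasDerivAt (f z.1) (f' z) z.2)
    (hf' : f' =o[shrinkingStrip] fun z => z.1⁻¹)
    (hleft : Tendsto (fun ε => f ε (-ε)) (𝓝[>] 0) (𝓝 f₀)) :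
    Tendsto (fun z => f z.1 z.2) shrinkingStrip (𝓝 f₀) := by
  have hvar : Tendsto (fun z => f z.1 z.2 - f z.1 (-z.1)) shrinkingStrip (𝓝 0) := by
    rw [← isLittleO_one_iff ℝ]
    refine IsLittleO.of_bound fun c hc => ?_
    have := eventually_norm_sub_left_le hf (hf'.def (half_pos hc))
    filter_upwards [this] with z hz
    simpa [mul_div_cancel₀] using hz
  simpa using hvar.add (hleft.comp tendsto_fst_shrinkingStrip)

end MeanValue

section Mollifier

variable {φ : ℝ → ℝ} {ε t L : ℝ}

theorem continuous_mollδ (hφ : Continuous φ) (ε : ℝ) : Continuous (mollδ φ ε) := by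
  unfold mollδ
  fun_prop

theorem differentiable_mollδ (hφ : Differentiable ℝ φ) (ε : ℝ) : Differentiable ℝ (mollδ φ ε) := by
  unfold mollδ
  fun_prop

theorem support_subset_Ioo_of_continuous (hφ : Continuous φ)
    (hsupp : Function.support φ ⊆ Icc (-1) 1) : Function.support φ ⊆ Ioo (-1) 1 :=
  (interior_maximal hsupp hφ.isOpen_support).trans interior_Icc.subset

theorem mollδ_eq_zero_of_le_neg (hφ : Continuous φ) (hsupp : Function.support φ ⊆ Icc (-1) 1)
    (hε : 0 < ε) (ht : t ≤ -ε) : mollδ φ ε t = 0 := by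
  have hle : t / ε ≤ -1 := by rw [div_le_iff₀ hε]; linarith
  have hzero : φ (t / ε) = 0 := by
    by_contra hne
    exact hle.not_gt (support_subset_Ioo_of_continuous hφ hsupp hne).1
  rw [mollδ, hzero, mul_zero]

theorem isBigO_inv_mollδ (hφ : Continuous φ) (hsupp : Function.support φ ⊆ Icc (-1) 1) :
    (fun z => mollδ φ z.1 z.2) =O[shrinkingStrip] fun z => z.1⁻¹ := by
  obtain ⟨M, hM⟩ := (HasCompactSupport.of_support_subset_isCompact isCompact_Icc
    hsupp).exists_bound_of_continuous hφ
  refine IsBigO.of_bound M (.of_forall fun z => ?_)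
  rw [mollδ, norm_mul, mul_comm]
  gcongr
  exact hM _

theorem hasDerivAt_mollΘ (hφ : Continuous φ) (ε t : ℝ) :
    HasDerivAt (mollΘ φ ε) (mollδ φ ε t) t :=
  ((continuous_mollδ hφ ε).integral_hasStrictDerivAt (-ε) t).hasDerivAt

theorem mollΘ_eq_zero_of_le_neg (hφ : Continuous φ) (hsupp : Function.support φ ⊆ Icc (-1) 1)
    (hε : 0 < ε) (ht : t ≤ -ε) : mollΘ φ ε t = 0 := by
  refine intervalIntegral.integral_zero_ae (.of_forall fun s hs => ?_)
  rw [uIoc_of_ge ht] at hs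
  exact mollδ_eq_zero_of_le_neg hφ hsupp hε hs.2

theorem mollΘ_self (hφ : Continuous φ) (hsupp : Function.support φ ⊆ Icc (-1) 1)
    (hint : ∫ t, φ t = 1) (hε : 0 < ε) : mollΘ φ ε ε = 1 := by
  calc mollΘ φ ε ε = ∫ s in (-1)..1, φ s := by
        simp only [mollΘ, mollδ]
        rw [intervalIntegral.integral_const_mul, intervalIntegral.integral_comp_div _ hε.ne',
          smul_eq_mul, inv_mul_cancel_left₀ hε.ne', neg_div, div_self hε.ne']
    _ = ∫ s, φ s := intervalIntegral.integral_eq_integral_of_support_subset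
        ((support_subset_Ioo_of_continuous hφ hsupp).trans Ioo_subset_Ioc_self)
    _ = 1 := hint

theorem isBigO_one_mollΘ (hφ : Continuous φ) (hsupp : Function.support φ ⊆ Icc (-1) 1) :
    (fun z => mollΘ φ z.1 z.2) =O[shrinkingStrip] fun _ => (1 : ℝ) :=
  isBigO_one_of_hasDerivAt (.of_forall fun z => hasDerivAt_mollΘ hφ z.1 z.2)
    (isBigO_inv_mollδ hφ hsupp) (by
      simpa only [mollΘ, intervalIntegral.integral_same] using
        isBigO_const_const (0 : ℝ) one_ne_zero _)

theorem isBigO_one_mollΘ_div (hφ : Continuous φ) (hsupp : Function.support φ ⊆ Icc (-1) 1)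
    (L : ℝ) : (fun z => mollΘ φ z.1 z.2 / L) =O[shrinkingStrip] fun _ => (1 : ℝ) := by
  simpa only [div_eq_inv_mul] using (isBigO_one_mollΘ hφ hsupp).const_mul_left L⁻¹

theorem dab_eq_mul_mollδ (hφ : Continuous φ) (hsupp : Function.support φ ⊆ Icc (-1) 1)
    (hε : 0 < ε) (ht : t ≤ L - ε) (α β : ℝ) : dab φ ε α β L t = α * mollδ φ ε t := by
  rw [dab, mollδ_eq_zero_of_le_neg hφ hsupp hε (by linarith : t - L ≤ -ε), mul_zero, add_zero]

theorem deriv_dab_eq_mul_deriv_mollδ (hφ : Continuous φ)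
    (hsupp : Function.support φ ⊆ Icc (-1) 1) (hε : 0 < ε) (ht : t < L - ε) (α β : ℝ) :
    deriv (fun s => dab φ ε α β L s) t = α * deriv (mollδ φ ε) t := by
  have hloc : (fun s => dab φ ε α β L s) =ᶠ[𝓝 t] fun s => α * mollδ φ ε s := by
    filter_upwards [Iio_mem_nhds ht] with s hs
    exact dab_eq_mul_mollδ hφ hsupp hε (le_of_lt hs) α β
  rw [hloc.deriv_eq, deriv_const_mul_field]

theorem dLL_eq_mollδ_div (hφ : Continuous φ) (hsupp : Function.support φ ⊆ Icc (-1) 1)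
    (hε : 0 < ε) (ht : t ≤ L - ε) : dLL φ ε L t = mollδ φ ε t / L := by
  rw [dLL, mollδ_eq_zero_of_le_neg hφ hsupp hε (by linarith : t - L ≤ -ε), sub_zero]

theorem thb_eq_mollΘ_div (hφ : Continuous φ) (hsupp : Function.support φ ⊆ Icc (-1) 1)
    (hε : 0 < ε) (ht : t ≤ L - ε) : thb φ ε L t = mollΘ φ ε t / L := by
  rw [thb, mollΘ_eq_zero_of_le_neg hφ hsupp hε (by linarith : t - L ≤ -ε), sub_zero]

end Mollifier

section Jump

variable {E : Type*} [NormedAddCommGroup E] [NormedSpace ℝ E] {φ : ℝ → ℝ}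

theorem tendsto_add_of_mollδ_forcing (hφ : Continuous φ)
    (hsupp : Function.support φ ⊆ Icc (-1) 1) (hint : ∫ t, φ t = 1)
    {f : ℝ → ℝ → E} {p q : ℝ × ℝ → E} {f₀ q₀ : E}
    (hf : ∀ᶠ z in shrinkingStrip, HasDerivAt (f z.1) (p z + mollδ φ z.1 z.2 • q z) z.2)
    (hp : p =o[shrinkingStrip] fun z => z.1⁻¹) (hq : Tendsto q shrinkingStrip (𝓝 q₀))
    (hleft : Tendsto (fun ε => f ε (-ε)) (𝓝[>] 0) (𝓝 f₀)) :
    Tendsto (fun ε => f ε ε) (𝓝[>] 0) (𝓝 (f₀ + q₀)) := by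
  have hderiv : ∀ᶠ z in shrinkingStrip, HasDerivAt (fun t => f z.1 t - mollΘ φ z.1 t • q₀)
      (p z + mollδ φ z.1 z.2 • (q z - q₀)) z.2 := by
    filter_upwards [hf] with z hz
    exact (hz.sub ((hasDerivAt_mollΘ hφ z.1 z.2).smul_const q₀)).congr_deriv (by module)
  have hspike : (fun z => mollδ φ z.1 z.2 • (q z - q₀)) =o[shrinkingStrip] fun z => z.1⁻¹ := by
    have hq₀ : (fun z => q z - q₀) =o[shrinkingStrip] fun _ => (1 : ℝ) :=
      (isLittleO_one_iff ℝ).2 (tendsto_sub_nhds_zero_iff.2 hq)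
    simpa using (isBigO_inv_mollδ hφ hsupp).smul_isLittleO hq₀
  have hlim := (tendsto_shrinkingStrip_of_hasDerivAt (f := fun ε t => f ε t - mollΘ φ ε t • q₀)
    hderiv (hp.add hspike) (by simpa [mollΘ] using hleft)).comp tendsto_right_shrinkingStrip
  refine (hlim.add_const q₀).congr' ?_
  filter_upwards [self_mem_nhdsWithin] with ε hε
  simp [mollΘ_self hφ hsupp hint hε]

theorem tendsto_add_of_deriv_mollδ_forcing (hφ : ContDiff ℝ 1 φ)
    (hsupp : Function.support φ ⊆ Icc (-1) 1) (hint : ∫ t, φ t = 1)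
    {f f' m : ℝ → ℝ → E} {p m' : ℝ × ℝ → E} {f₀ m₀ : E}
    (hf : ∀ᶠ z in shrinkingStrip, HasDerivAt (f z.1) (f' z.1 z.2) z.2)
    (hf' : ∀ᶠ z in shrinkingStrip,
      HasDerivAt (f' z.1) (p z + deriv (mollδ φ z.1) z.2 • m z.1 z.2) z.2)
    (hm : ∀ᶠ z in shrinkingStrip, HasDerivAt (m z.1) (m' z) z.2)
    (hp : p =O[shrinkingStrip] fun z => z.1⁻¹)
    (hm' : m' =O[shrinkingStrip] fun _ => (1 : ℝ))
    (hm₀ : Tendsto (fun z => m z.1 z.2) shrinkingStrip (𝓝 m₀))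
    (hleft : Tendsto (fun ε => f ε (-ε)) (𝓝[>] 0) (𝓝 f₀))
    (hleft' : (fun ε => f' ε (-ε)) =O[𝓝[>] 0] fun _ => (1 : ℝ)) :
    Tendsto (fun ε => f ε ε) (𝓝[>] 0) (𝓝 (f₀ + m₀)) := by
  let g : ℝ → ℝ → E := fun ε t => f' ε t - mollδ φ ε t • m ε t
  have hg : ∀ᶠ z in shrinkingStrip, HasDerivAt (g z.1) (p z - mollδ φ z.1 z.2 • m' z) z.2 := by
    filter_upwards [hf', hm] with z hf' hm
    have hδ := (differentiable_mollδ (hφ.differentiable one_ne_zero) z.1 z.2).hasDerivAt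
    exact (hf'.sub (hδ.smul hm)).congr_deriv (by module)
  have hg' : (fun z => p z - mollδ φ z.1 z.2 • m' z) =O[shrinkingStrip] fun z => z.1⁻¹ :=
    hp.sub (by simpa using (isBigO_inv_mollδ hφ.continuous hsupp).smul hm')
  have hgleft : (fun ε => g ε (-ε)) =O[𝓝[>] 0] fun _ => (1 : ℝ) := by
    refine hleft'.congr' ?_ .rfl
    filter_upwards [self_mem_nhdsWithin] with ε hε
    simp [g, mollδ_eq_zero_of_le_neg hφ.continuous hsupp hε le_rfl]
  have hg₁ := isBigO_one_of_hasDerivAt hg hg' hgleft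
  exact tendsto_add_of_mollδ_forcing hφ.continuous hsupp hint (hf.mono fun z hz => by simpa [g])
    (hg₁.trans_isLittleO one_isLittleO_inv_fst_shrinkingStrip) hm₀ hleft

end Jump

section AprioriBound

variable {E : Type*} [NormedAddCommGroup E] [NormedSpace ℝ E]

theorem norm_velocity_le_of_norm_acceleration_lt {x v w : ℝ → E} {x₀ : E} {a b R₀ R s : ℝ}
    (hR : 0 < R) (hx : ∀ t ∈ Icc a b, HasDerivAt x (v t) t)
    (hv : ∀ t ∈ Icc a b, HasDerivAt v (w t) t) (hxa : R * ‖x a - x₀‖ ≤ R₀) (hva : ‖v a‖ ≤ R₀)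
    (hsR : R₀ + s * (b - a) ≤ R) (hRs : R * R < s)
    (hw : ∀ t ∈ Icc a b, ‖x t - x₀‖ ≤ 1 → ‖v t‖ ≤ R → ‖w t‖ < s) :
    ∀ t ∈ Icc a b, ‖v t‖ ≤ R := by
  have hbarrier : ∀ t ∈ Icc a b, R₀ + s * (t - a) ≤ R := fun t ht => by
    have : s * (t - a) ≤ s * (b - a) := by gcongr; exacts [(mul_pos hR hR).le.trans hRs.le, ht.2]
    linarith
  -- Scaling position by `R` lets a single barrier control both `‖x - x₀‖ ≤ 1` and `‖v‖ ≤ R`.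
  let y : ℝ → E × E := fun t => (R • (x t - x₀), v t)
  have hy : ∀ t ∈ Icc a b, HasDerivAt y (R • v t, w t) t := fun t ht =>
    (((hx t ht).sub_const x₀).const_smul R).prodMk (hv t ht)
  have hya : ‖y a‖ ≤ R₀ + s * (a - a) := by
    simpa [y, Prod.norm_def, norm_smul, abs_of_pos hR] using ⟨hxa, hva⟩
  have hy' : ∀ t ∈ Icc a b, ‖y t‖ = R₀ + s * (t - a) → ‖(R • v t, w t)‖ < s := fun t ht hyt => by
    have hyR := hyt.trans_le (hbarrier t ht)
    simp only [y, Prod.norm_def, sup_le_iff, norm_smul, Real.norm_of_nonneg hR.le] at hyR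
    have hnear : ‖x t - x₀‖ ≤ 1 := le_of_mul_le_mul_left (by simpa using hyR.1) hR
    simp only [Prod.norm_def, sup_lt_iff, norm_smul, Real.norm_of_nonneg hR.le]
    exact ⟨(mul_le_mul_of_nonneg_left hyR.2 hR.le).trans_lt hRs, hw t ht hnear hyR.2⟩
  intro t ht
  calc ‖v t‖ ≤ ‖y t‖ := norm_snd_le (y t)
    _ ≤ R₀ + s * (t - a) := image_norm_le_of_norm_deriv_right_lt_deriv_boundary
        (B' := fun _ => s) (fun u hu => (hy u hu).continuousAt.continuousWithinAt)
        (fun u hu => (hy u (Ico_subset_Icc_self hu)).hasDerivWithinAt) hya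
        (fun u => by simpa using (((hasDerivAt_id u).sub_const a).const_mul s).const_add R₀)
        (fun u hu => hy' u (Ico_subset_Icc_self hu)) ht
    _ ≤ R := hbarrier t ht

variable [ProperSpace E] {G : Type*} [NormedAddCommGroup G] [ProperSpace G]
  {P : G × E × E → E} {F : E → E} {θ : ℝ × ℝ → G} {δ : ℝ × ℝ → ℝ}

theorem exists_forall_eventually_norm_acceleration_lt (hP : Continuous P) (hF : Continuous F)
    (hθ : θ =O[shrinkingStrip] fun _ => (1 : ℝ)) (hδ : δ =O[shrinkingStrip] fun z => z.1⁻¹)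
    (x₀ : E) :
    ∃ s > 0, ∀ R, ∀ᶠ z in shrinkingStrip, ∀ y w, ‖y - x₀‖ ≤ 1 → ‖w‖ ≤ R →
      ‖P (θ z, y, w) + δ z • F y‖ < s / z.1 := by
  obtain ⟨T, hT⟩ := hθ.bound
  obtain ⟨D, hD₀, hD⟩ := hδ.exists_nonneg
  obtain ⟨c, hc⟩ := (isCompact_closedBall x₀ 1).exists_bound_of_continuousOn hF.continuousOn
  have hc₀ : 0 ≤ c := (norm_nonneg _).trans (hc x₀ (by simp))
  refine ⟨D * c + 1, by positivity, fun R => ?_⟩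
  obtain ⟨C, hC⟩ := ((isCompact_closedBall (0 : G) T).prod ((isCompact_closedBall x₀ 1).prod
    (isCompact_closedBall (0 : E) R))).exists_bound_of_continuousOn hP.continuousOn
  filter_upwards [hT, hD.bound, eventually_pos_shrinkingStrip,
    tendsto_fst_shrinkingStrip.eventually (eventually_mul_lt_nhdsGT_zero C one_pos)]
    with z hT hD hpos hCz y w hy hw
  have hPz : ‖P (θ z, y, w)‖ ≤ C :=
    hC _ ⟨by simpa using hT, mem_closedBall_iff_norm.2 hy, by simpa using hw⟩
  have hFy : ‖F y‖ ≤ c := hc _ (mem_closedBall_iff_norm.2 hy)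
  rw [Real.norm_of_nonneg (inv_pos.2 hpos).le] at hD
  calc ‖P (θ z, y, w) + δ z • F y‖ ≤ ‖P (θ z, y, w)‖ + ‖δ z‖ * ‖F y‖ := by
        rw [← norm_smul]; exact norm_add_le _ _
    _ ≤ C + D * z.1⁻¹ * c := by gcongr
    _ = (D * c + C * z.1) / z.1 := by field_simp; ring
    _ < (D * c + 1) / z.1 := by gcongr

theorem isBigO_one_velocity_of_impulsive (hP : Continuous P) (hF : Continuous F)
    {x v : ℝ → ℝ → E} {x₀ v₀ : E}
    (hx : ∀ᶠ z in shrinkingStrip, HasDerivAt (x z.1) (v z.1 z.2) z.2)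
    (hv : ∀ᶠ z in shrinkingStrip,
      HasDerivAt (v z.1) (P (θ z, x z.1 z.2, v z.1 z.2) + δ z • F (x z.1 z.2)) z.2)
    (hθ : θ =O[shrinkingStrip] fun _ => (1 : ℝ)) (hδ : δ =O[shrinkingStrip] fun z => z.1⁻¹)
    (hx₀ : Tendsto (fun ε => x ε (-ε)) (𝓝[>] 0) (𝓝 x₀))
    (hv₀ : Tendsto (fun ε => v ε (-ε)) (𝓝[>] 0) (𝓝 v₀)) :
    (fun z => v z.1 z.2) =O[shrinkingStrip] fun _ => (1 : ℝ) := by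
  obtain ⟨s, hs, hacc⟩ := exists_forall_eventually_norm_acceleration_lt hP hF hθ hδ x₀
  -- At acceleration `s / ε`, the velocity changes by at most `2 * s` across the strip.
  let R := ‖v₀‖ + 1 + 2 * s
  have hR : 0 < R := by positivity
  have hxleft : ∀ᶠ ε in 𝓝[>] 0, R * ‖x ε (-ε) - x₀‖ < ‖v₀‖ + 1 :=
    ((tendsto_iff_norm_sub_tendsto_zero.1 hx₀).const_mul R).eventually_lt_const
      (by rw [mul_zero]; positivity)
  have hvleft : ∀ᶠ ε in 𝓝[>] 0, ‖v ε (-ε)‖ < ‖v₀‖ + 1 :=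
    hv₀.norm.eventually_lt_const (lt_add_one _)
  have haccR := hacc R
  refine IsBigO.of_bound R ?_
  rw [eventually_shrinkingStrip] at hx hv haccR ⊢
  filter_upwards [hx, hv, haccR, hxleft, hvleft, eventually_mul_lt_nhdsGT_zero (R * R) hs,
    self_mem_nhdsWithin] with ε hx hv hacc hxleft hvleft hRε (hε : 0 < ε)
  have hwidth : ‖v₀‖ + 1 + s / ε * (ε - -ε) = R := by
    simp only [R]
    field_simp
    ring
  simpa using norm_velocity_le_of_norm_acceleration_lt hR hx hv hxleft.le hvleft.le hwidth.le
    ((lt_div_iff₀ hε).2 hRε) fun t ht => hacc t ht _ _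

end AprioriBound

section GeodesicEquations

variable {n : ℕ} {h hinv : (Fin n → ℝ) → Matrix (Fin n) (Fin n) ℝ} {H : (Fin n → ℝ) → ℝ}
  {a : (Fin n → ℝ) → Fin n → ℝ} {φ : ℝ → ℝ} {ε α β L t : ℝ} {x : ℝ → Fin n → ℝ}

/-- The part of the acceleration `ẍ` without `δ_ε`, at profile value `ϑ = z.1`, position `z.2.1`
and velocity `z.2.2`. -/
def xDrift (n : ℕ) (h hinv : (Fin n → ℝ) → Matrix (Fin n) (Fin n) ℝ)
    (a : (Fin n → ℝ) → Fin n → ℝ) (z : ℝ × (Fin n → ℝ) × (Fin n → ℝ)) : Fin n → ℝ := fun i =>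
  -(∑ j, ∑ k, christoffelSym n h hinv z.2.1 i j k * z.2.2 j * z.2.2 k)
  - z.1 * (∑ j, ∑ k, hinv z.2.1 i k *
      (pderiv' n (fun y => a y k) j z.2.1 - pderiv' n (fun y => a y j) k z.2.1) * z.2.2 j)

/-- The coefficient of `δ_ε` in `ẍ` near the first spike; it is the velocity jump there. -/
def xKick (n : ℕ) (hinv : (Fin n → ℝ) → Matrix (Fin n) (Fin n) ℝ) (H : (Fin n → ℝ) → ℝ)
    (a : (Fin n → ℝ) → Fin n → ℝ) (α L : ℝ) (y : Fin n → ℝ) : Fin n → ℝ := fun i =>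
  -((1/2) * ∑ k, hinv y i k * (2 * a y k / L - α * pderiv' n H k y))

/-- The part of `r̈` without `δ_ε` and `δ_ε'`, at profile value `ϑ = z.1`, position `z.2.1` and
velocity `z.2.2`. -/
def rDrift (n : ℕ) (h hinv : (Fin n → ℝ) → Matrix (Fin n) (Fin n) ℝ)
    (a : (Fin n → ℝ) → Fin n → ℝ) (z : ℝ × (Fin n → ℝ) × (Fin n → ℝ)) : ℝ :=
  z.1 * (∑ i, ∑ j,
    ((1/2) * (pderiv' n (fun y => a y i) j z.2.1 + pderiv' n (fun y => a y j) i z.2.1)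
      - ∑ k, christoffelSym n h hinv z.2.1 k i j * a z.2.1 k) * z.2.2 i * z.2.2 j)
  - ∑ j, (∑ i, (∑ k, hinv z.2.1 i k * a z.2.1 k) * z.1 * z.1 *
      (pderiv' n (fun y => a y i) j z.2.1 - pderiv' n (fun y => a y j) i z.2.1)) * z.2.2 j

/-- The coefficient of `δ_ε` in `r̈` near the first spike, at profile value `ϑ = z.1`, position
`z.2.1` and velocity `z.2.2`. -/
def rKick (n : ℕ) (hinv : (Fin n → ℝ) → Matrix (Fin n) (Fin n) ℝ) (H : (Fin n → ℝ) → ℝ)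
    (a : (Fin n → ℝ) → Fin n → ℝ) (α L : ℝ) (z : ℝ × (Fin n → ℝ) × (Fin n → ℝ)) : ℝ :=
  (∑ j, α * pderiv' n H j z.2.1 * z.2.2 j)
  - ∑ i, (∑ k, hinv z.2.1 i k * a z.2.1 k) * z.1 *
      (a z.2.1 i / L - (1/2) * α * pderiv' n H i z.2.1)

theorem impXEq.deriv_deriv_eq (hφ : Continuous φ) (hsupp : Function.support φ ⊆ Icc (-1) 1)
    (hε : 0 < ε) (ht : t ≤ L - ε) (hx : impXEq n h hinv H a φ ε α β L x t) :
    deriv (deriv x) t = xDrift n h hinv a (mollΘ φ ε t / L, x t, deriv x t)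
      + mollδ φ ε t • xKick n hinv H a α L (x t) := by
  funext i
  have hspike : ∑ k, hinv (x t) i k *
        (2 * a (x t) k * (mollδ φ ε t / L) - pderiv' n H k (x t) * (α * mollδ φ ε t))
      = mollδ φ ε t * ∑ k, hinv (x t) i k * (2 * a (x t) k / L - α * pderiv' n H k (x t)) := by
    rw [Finset.mul_sum]
    exact Finset.sum_congr rfl fun k _ => by ring
  rw [hx i, thb_eq_mollΘ_div hφ hsupp hε ht, dLL_eq_mollδ_div hφ hsupp hε ht,
    dab_eq_mul_mollδ hφ hsupp hε ht, hspike]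
  simp only [xDrift, xKick, Pi.add_apply, Pi.smul_apply, smul_eq_mul]
  ring

theorem impREq.deriv_deriv_eq (hφ : Continuous φ) (hsupp : Function.support φ ⊆ Icc (-1) 1)
    (hε : 0 < ε) (ht : t < L - ε) {r : ℝ → ℝ} (hr : impREq n h hinv H a φ ε α β L x r t) :
    deriv (deriv r) t = rDrift n h hinv a (mollΘ φ ε t / L, x t, deriv x t)
      + mollδ φ ε t * rKick n hinv H a α L (mollΘ φ ε t / L, x t, deriv x t)
      + deriv (mollδ φ ε) t * (α / 2 * H (x t)) := by
  have hvelocity (A : Fin n → ℝ) :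
      ∑ j, (A j - pderiv' n H j (x t) * (α * mollδ φ ε t)) * deriv x t j
      = ∑ j, A j * deriv x t j
        - mollδ φ ε t * ∑ j, α * pderiv' n H j (x t) * deriv x t j := by
    rw [Finset.mul_sum, ← Finset.sum_sub_distrib]
    exact Finset.sum_congr rfl fun j _ => by ring
  have hspike (A : Fin n → ℝ) (θ : ℝ) :
      ∑ i, A i * θ * (a (x t) i * (mollδ φ ε t / L)
        - (1/2) * pderiv' n H i (x t) * (α * mollδ φ ε t))
      = mollδ φ ε t * ∑ i, A i * θ * (a (x t) i / L - (1/2) * α * pderiv' n H i (x t)) := by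
    rw [Finset.mul_sum]
    exact Finset.sum_congr rfl fun i _ => by ring
  rw [hr, thb_eq_mollΘ_div hφ hsupp hε ht.le, dLL_eq_mollδ_div hφ hsupp hε ht.le,
    dab_eq_mul_mollδ hφ hsupp hε ht.le, deriv_dab_eq_mul_deriv_mollδ hφ hsupp hε ht, hvelocity,
    hspike (fun i => ∑ k, hinv (x t) i k * a (x t) k)]
  simp only [rDrift, rKick]
  ring

theorem eventually_hasDerivAt_velocity (hφ : Continuous φ)
    (hsupp : Function.support φ ⊆ Icc (-1) 1) (hL : 0 < L) {x : ℝ → ℝ → Fin n → ℝ}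
    (hx : ∀ᶠ ε in 𝓝[>] 0, ContDiff ℝ 2 (x ε))
    (hode : ∀ᶠ ε in 𝓝[>] 0, ∀ t ∈ Icc (-ε) ε, impXEq n h hinv H a φ ε α β L (x ε) t) :
    ∀ᶠ z in shrinkingStrip, HasDerivAt (deriv (x z.1))
      (xDrift n h hinv a (mollΘ φ z.1 z.2 / L, x z.1 z.2, deriv (x z.1) z.2)
        + mollδ φ z.1 z.2 • xKick n hinv H a α L (x z.1 z.2)) z.2 := by
  have hode' : ∀ᶠ z in shrinkingStrip, impXEq n h hinv H a φ z.1 α β L (x z.1) z.2 :=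
    eventually_shrinkingStrip.2 hode
  filter_upwards [eventually_hasDerivAt_of_contDiff_two hx, hode',
    eventually_pos_shrinkingStrip, eventually_snd_lt_sub_fst_shrinkingStrip hL]
    with z hz hode hpos hlt
  exact hz.2.congr_deriv (hode.deriv_deriv_eq hφ hsupp hpos hlt.le)

theorem eventually_hasDerivAt_deriv_r (hφ : Continuous φ)
    (hsupp : Function.support φ ⊆ Icc (-1) 1) (hL : 0 < L) {x : ℝ → ℝ → Fin n → ℝ}
    {r : ℝ → ℝ → ℝ} (hr : ∀ᶠ ε in 𝓝[>] 0, ContDiff ℝ 2 (r ε))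
    (hode : ∀ᶠ ε in 𝓝[>] 0, ∀ t ∈ Icc (-ε) ε, impREq n h hinv H a φ ε α β L (x ε) (r ε) t) :
    ∀ᶠ z in shrinkingStrip, HasDerivAt (deriv (r z.1))
      (rDrift n h hinv a (mollΘ φ z.1 z.2 / L, x z.1 z.2, deriv (x z.1) z.2)
        + mollδ φ z.1 z.2 *
          rKick n hinv H a α L (mollΘ φ z.1 z.2 / L, x z.1 z.2, deriv (x z.1) z.2)
        + deriv (mollδ φ z.1) z.2 • (α / 2 * H (x z.1 z.2))) z.2 := by
  have hode' : ∀ᶠ z in shrinkingStrip, impREq n h hinv H a φ z.1 α β L (x z.1) (r z.1) z.2 :=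
    eventually_shrinkingStrip.2 hode
  filter_upwards [eventually_hasDerivAt_of_contDiff_two hr, hode',
    eventually_pos_shrinkingStrip, eventually_snd_lt_sub_fst_shrinkingStrip hL]
    with z hz hode hpos hlt
  exact hz.2.congr_deriv (hode.deriv_deriv_eq hφ hsupp hpos hlt)

theorem continuous_pderiv' {f : (Fin n → ℝ) → ℝ} (hf : ContDiff ℝ 1 f) (j : Fin n) :
    Continuous (pderiv' n f j) :=
  (hf.continuous_fderiv one_ne_zero).clm_apply continuous_const

theorem continuous_christoffelSym (hh : ∀ i j, ContDiff ℝ 1 fun y => h y i j)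
    (hhinv : Continuous hinv) (i j k : Fin n) :
    Continuous fun y => christoffelSym n h hinv y i j k := by
  have hdh (l m p : Fin n) := continuous_pderiv' (hh l m) p
  unfold christoffelSym
  fun_prop

theorem continuous_xDrift (hh : ∀ i j, ContDiff ℝ 1 fun y => h y i j) (hhinv : Continuous hinv)
    (ha : ∀ i, ContDiff ℝ 1 fun y => a y i) : Continuous (xDrift n h hinv a) := by
  have hΓ := continuous_christoffelSym hh hhinv
  have hda (k j : Fin n) := continuous_pderiv' (ha k) j
  unfold xDrift
  fun_prop

theorem continuous_xKick (hhinv : Continuous hinv) (hH : ContDiff ℝ 1 H) (ha : Continuous a)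
    (α L : ℝ) : Continuous (xKick n hinv H a α L) := by
  have hdH := continuous_pderiv' hH
  unfold xKick
  fun_prop

theorem continuous_rDrift (hh : ∀ i j, ContDiff ℝ 1 fun y => h y i j) (hhinv : Continuous hinv)
    (ha : ∀ i, ContDiff ℝ 1 fun y => a y i) : Continuous (rDrift n h hinv a) := by
  have hΓ := continuous_christoffelSym hh hhinv
  have hac (i : Fin n) := (ha i).continuous
  have hda (k j : Fin n) := continuous_pderiv' (ha k) j
  unfold rDrift
  fun_prop

theorem continuous_rKick (hhinv : Continuous hinv) (hH : ContDiff ℝ 1 H) (ha : Continuous a)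
    (α L : ℝ) : Continuous (rKick n hinv H a α L) := by
  have hdH := continuous_pderiv' hH
  unfold rKick
  fun_prop

theorem tendsto_r_of_impREq (hh : ∀ i j, ContDiff ℝ 1 fun y => h y i j) (hhinv : Continuous hinv)
    (hH : ContDiff ℝ 1 H) (ha : ∀ i, ContDiff ℝ 1 fun y => a y i) (hL : 0 < L)
    (hφ : ContDiff ℝ 1 φ) (hsupp : Function.support φ ⊆ Icc (-1) 1) (hint : ∫ t, φ t = 1)
    {x : ℝ → ℝ → Fin n → ℝ} {r : ℝ → ℝ → ℝ} {x₀ : Fin n → ℝ} {r₀ : ℝ}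
    (hx : ∀ᶠ z in shrinkingStrip, HasDerivAt (x z.1) (deriv (x z.1) z.2) z.2)
    (hv : (fun z => deriv (x z.1) z.2) =O[shrinkingStrip] fun _ => (1 : ℝ))
    (hx₀ : Tendsto (fun z => x z.1 z.2) shrinkingStrip (𝓝 x₀))
    (hr : ∀ᶠ ε in 𝓝[>] 0, ContDiff ℝ 2 (r ε))
    (hode : ∀ᶠ ε in 𝓝[>] 0, ∀ t ∈ Icc (-ε) ε, impREq n h hinv H a φ ε α β L (x ε) (r ε) t)
    (hr₀ : Tendsto (fun ε => r ε (-ε)) (𝓝[>] 0) (𝓝 r₀))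
    (hdr : (fun ε => deriv (r ε) (-ε)) =O[𝓝[>] 0] fun _ => (1 : ℝ)) :
    Tendsto (fun ε => r ε ε) (𝓝[>] 0) (𝓝 (r₀ + α / 2 * H x₀)) := by
  have hstate := (isBigO_one_mollΘ_div hφ.continuous hsupp L).prod_left
    ((hx₀.isBigO_one ℝ).prod_left hv)
  have hdrift := isBigO_one_comp_of_continuous (continuous_rDrift hh hhinv ha) hstate
  have hkick := isBigO_one_comp_of_continuous
    (continuous_rKick hhinv hH (continuous_pi fun i => (ha i).continuous) α L) hstate
  have hforce := (hdrift.trans one_isLittleO_inv_fst_shrinkingStrip.isBigO).add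
    (by simpa using (isBigO_inv_mollδ hφ.continuous hsupp).mul hkick)
  have hm : ∀ᶠ z in shrinkingStrip, HasDerivAt (fun t => α / 2 * H (x z.1 t))
      (α / 2 * fderiv ℝ H (x z.1 z.2) (deriv (x z.1) z.2)) z.2 := hx.mono fun z hz =>
    ((hH.differentiable one_ne_zero _).hasFDerivAt.comp_hasDerivAt z.2 hz).const_mul _
  have hm' : Continuous fun z : ℝ × (Fin n → ℝ) × (Fin n → ℝ) =>
      α / 2 * fderiv ℝ H z.2.1 z.2.2 := by
    have := hH.continuous_fderiv one_ne_zero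
    fun_prop
  exact tendsto_add_of_deriv_mollδ_forcing (m := fun ε t => α / 2 * H (x ε t)) hφ hsupp hint
    ((eventually_hasDerivAt_of_contDiff_two hr).mono fun z hz => hz.1)
    (eventually_hasDerivAt_deriv_r hφ.continuous hsupp hL hr hode) hm hforce
    (isBigO_one_comp_of_continuous hm' hstate)
    (((hH.continuous.tendsto x₀).comp hx₀).const_mul (α / 2)) hr₀ hdr

end GeodesicEquations

theorem impulsive_jump_formulas_general
    (n : ℕ) (h hinv : (Fin n → ℝ) → Matrix (Fin n) (Fin n) ℝ)
    (hh : ∀ i j, ContDiff ℝ 1 fun y => h y i j) (hhinv : ∀ y, h y * hinv y = 1)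
    (H : (Fin n → ℝ) → ℝ) (hH : ContDiff ℝ 1 H)
    (a : (Fin n → ℝ) → Fin n → ℝ) (ha : ∀ i, ContDiff ℝ 1 fun y => a y i)
    (α β L : ℝ) (hL : 0 < L)
    (φ : ℝ → ℝ) (hφ : ContDiff ℝ 1 φ) (hsupp : Function.support φ ⊆ Icc (-1) 1)
    (hint : ∫ t, φ t = 1)
    (x : ℝ → ℝ → Fin n → ℝ) (r : ℝ → ℝ → ℝ) (x₀ dx₀ : Fin n → ℝ) (r₀ : ℝ)
    (hx : ∀ᶠ ε in 𝓝[>] 0, ContDiff ℝ 2 (x ε)) (hr : ∀ᶠ ε in 𝓝[>] 0, ContDiff ℝ 2 (r ε))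
    (hodex : ∀ᶠ ε in 𝓝[>] 0, ∀ t ∈ Icc (-ε) ε, impXEq n h hinv H a φ ε α β L (x ε) t)
    (hoder : ∀ᶠ ε in 𝓝[>] 0, ∀ t ∈ Icc (-ε) ε, impREq n h hinv H a φ ε α β L (x ε) (r ε) t)
    (hx₀ : Tendsto (fun ε => x ε (-ε)) (𝓝[>] 0) (𝓝 x₀))
    (hdx₀ : Tendsto (fun ε => deriv (x ε) (-ε)) (𝓝[>] 0) (𝓝 dx₀))
    (hr₀ : Tendsto (fun ε => r ε (-ε)) (𝓝[>] 0) (𝓝 r₀))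
    (hdr : (fun ε => deriv (r ε) (-ε)) =O[𝓝[>] 0] fun _ => (1 : ℝ)) :
    Tendsto (fun ε => x ε ε) (𝓝[>] 0) (𝓝 x₀) ∧
    Tendsto (fun ε => deriv (x ε) ε) (𝓝[>] 0) (𝓝 (fun i => dx₀ i
      - (1/2) * ∑ k, hinv x₀ i k * (2 * a x₀ k / L - α * pderiv' n H k x₀))) ∧
    Tendsto (fun ε => r ε ε) (𝓝[>] 0) (𝓝 (r₀ + (α / 2) * H x₀)) := by
  have hinvc : Continuous hinv :=
    continuous_matrix_of_mul_eq_one (continuous_matrix fun i j => (hh i j).continuous) hhinv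
  have hac : Continuous a := continuous_pi fun i => (ha i).continuous
  have hdrift := continuous_xDrift hh hinvc ha
  have hkick := continuous_xKick hinvc hH hac α L
  have hθ := isBigO_one_mollΘ_div hφ.continuous hsupp L
  have hx' := (eventually_hasDerivAt_of_contDiff_two hx).mono fun z hz => hz.1
  have hx'' := eventually_hasDerivAt_velocity hφ.continuous hsupp hL hx hodex
  have hv := isBigO_one_velocity_of_impulsive hdrift hkick hx' hx'' hθ
    (isBigO_inv_mollδ hφ.continuous hsupp) hx₀ hdx₀
  have hxlim := tendsto_shrinkingStrip_of_hasDerivAt hx'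
    (hv.trans_isLittleO one_isLittleO_inv_fst_shrinkingStrip) hx₀
  have hstate := hθ.prod_left ((hxlim.isBigO_one ℝ).prod_left hv)
  refine ⟨hxlim.comp tendsto_right_shrinkingStrip, ?_, ?_⟩
  · have hjump : dx₀ + xKick n hinv H a α L x₀ = fun i => dx₀ i
        - (1/2) * ∑ k, hinv x₀ i k * (2 * a x₀ k / L - α * pderiv' n H k x₀) :=
      funext fun i => (sub_eq_add_neg _ _).symm
    rw [← hjump]
    exact tendsto_add_of_mollδ_forcing hφ.continuous hsupp hint hx''
      ((isBigO_one_comp_of_continuous hdrift hstate).trans_isLittleO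
        one_isLittleO_inv_fst_shrinkingStrip)
      ((hkick.tendsto x₀).comp hxlim) hdx₀
  · exact tendsto_r_of_impREq hh hinvc hH ha hL hφ hsupp hint hx' hv hxlim hr hoder hr₀ hdr

end Development

/-- **limit jump formulas at the first impulsive spike.**
As `ε ↘ 0`: (i) `x_ε(ε) → x₀`; (ii) `ẋ_ε(ε)ⁱ → ẋ₀ⁱ − ½h^{ik}(x₀)(2a_k(x₀)/L −
αH_{,k}(x₀))`; (iii) `r_ε(ε) → r₀ + (α/2)H(x₀)`. -/
theorem impulsive_jump_formulas
    (n : ℕ) (h hinv : (Fin n → ℝ) → Matrix (Fin n) (Fin n) ℝ)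
    (hmet : IsRiemMetric n h hinv)
    (H : (Fin n → ℝ) → ℝ) (hH : ContDiff ℝ (⊤ : ℕ∞) H)
    (a : (Fin n → ℝ) → Fin n → ℝ) (ha : ∀ i, ContDiff ℝ (⊤ : ℕ∞) (fun y => a y i))
    (α β L K : ℝ) (hL : 0 < L) (hK : 0 < K)
    (φ : ℝ → ℝ) (hφ : ContDiff ℝ (⊤ : ℕ∞) φ) (hφsupp : Function.support φ ⊆ Set.Icc (-1) 1)
    (hφint : ∫ t, φ t = 1) (hφK : ∫ t, |φ t| ≤ K)
    (ε₁ : ℝ) (hε₁ : 0 < ε₁) (hε₁1 : ε₁ ≤ 1) (hε₁L : ε₁ < L / 2)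
    (x : ℝ → ℝ → Fin n → ℝ) (r : ℝ → ℝ → ℝ)
    (x₀ dx₀ : Fin n → ℝ) (r₀ dr₀ : ℝ)
    (hsmooth : ∀ ε ∈ Set.Ioc (0:ℝ) ε₁, ContDiff ℝ 2 (x ε) ∧ ContDiff ℝ 2 (r ε))
    -- the geodesic equations hold on the strip `[−ε, ε]`
    (hodex : ∀ ε ∈ Set.Ioc (0:ℝ) ε₁, ∀ t ∈ Set.Icc (-ε) ε,
      impXEq n h hinv H a φ ε α β L (x ε) t)
    (hoder : ∀ ε ∈ Set.Ioc (0:ℝ) ε₁, ∀ t ∈ Set.Icc (-ε) ε,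
      impREq n h hinv H a φ ε α β L (x ε) (r ε) t)
    -- the data at the left end of the strip converges
    (hd1 : Tendsto (fun ε => x ε (-ε)) (nhdsWithin 0 (Set.Ioi 0)) (nhds x₀))
    (hd2 : Tendsto (fun ε => deriv (x ε) (-ε)) (nhdsWithin 0 (Set.Ioi 0)) (nhds dx₀))
    (hd3 : Tendsto (fun ε => r ε (-ε)) (nhdsWithin 0 (Set.Ioi 0)) (nhds r₀))
    (hd4 : Tendsto (fun ε => deriv (r ε) (-ε)) (nhdsWithin 0 (Set.Ioi 0)) (nhds dr₀))
    -- `(x_ε, ẋ_ε)` is uniformly bounded on the strip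
    (hbd : ∃ B : ℝ, ∀ ε ∈ Set.Ioc (0:ℝ) ε₁, ∀ t ∈ Set.Icc (-ε) ε,
      ‖x ε t‖ ≤ B ∧ ‖deriv (x ε) t‖ ≤ B) :
    -- (i)
    Tendsto (fun ε => x ε ε) (nhdsWithin 0 (Set.Ioi 0)) (nhds x₀) ∧
    -- (ii)
    Tendsto (fun ε => deriv (x ε) ε) (nhdsWithin 0 (Set.Ioi 0))
      (nhds (fun i => dx₀ i
        - (1/2) * ∑ k, hinv x₀ i k * (2 * a x₀ k / L - α * pderiv' n H k x₀))) ∧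
    -- (iii)
    Tendsto (fun ε => r ε ε) (nhdsWithin 0 (Set.Ioi 0))
      (nhds (r₀ + (α / 2) * H x₀)) := by
  have hpos : Ioc 0 ε₁ ∈ nhdsWithin 0 (Ioi 0) := Ioc_mem_nhdsGT hε₁
  have hle : (1 : WithTop ℕ∞) ≤ ((⊤ : ℕ∞) : WithTop ℕ∞) := by exact_mod_cast le_top
  exact impulsive_jump_formulas_general n h hinv (fun i j => (hmet.1 i j).of_le hle)
    hmet.2.2.2.2 H (hH.of_le hle) a (fun i => (ha i).of_le hle) α β L hL φ (hφ.of_le hle) hφsupp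
    hφint x r x₀ dx₀ r₀ (eventually_of_mem hpos fun ε hε => (hsmooth ε hε).1)
    (eventually_of_mem hpos fun ε hε => (hsmooth ε hε).2) (eventually_of_mem hpos hodex)
    (eventually_of_mem hpos hoder) hd1 hd2 hd3 (hd4.isBigO_one ℝ)
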